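/- arXiv:2602.10857 — 4 statements merged into one kernel-verified Lean document; each statement's English description precedes it below -/
import Mathlib

section
/- Let u be a rate function (u(m,n) > 0 for m ≥ 1, n ≥ 0; u(0,n) = 0) such that for all m, n ≥ 1, u(m,n) + u(n,m) = (u(1,n)/u(n+1,0))·(u(m,0)/u(1,m−1))·u(n+1,m−1) + (u(1,m)/u(m+1,0))·(u(n,0)/u(1,n−1))·u(m+1,n−1). Then for all m, n ≥ 1, u(m,n)/(u(m,0)·u(1,n)) = u(n+1,m−1)/(u(n+1,0)·u(1,m−1)). -/
open scoped Classical

namespace LRMP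

/-- A rate function: `u m n` is positive when the departure site is occupied
(`m ≥ 1`) and zero when it is empty (`m = 0`). -/
def IsRate (u : ℕ → ℕ → ℝ) : Prop :=
  (∀ m n : ℕ, 1 ≤ m → 0 < u m n) ∧ ∀ n : ℕ, u 0 n = 0

/-- The configuration `η^{k,ℓ}`: one particle moved from site `k` to site `ℓ`. -/
def move (L : ℕ) (η : ZMod L → ℕ) (k ℓ : ZMod L) : ZMod L → ℕ :=
  fun a => if a = k then η a - 1 else if a = ℓ then η a + 1 else η a

/-- Every site strictly between `k` and `ℓ`, moving clockwise from `k`, is empty in `η`. -/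
def RightClear (L : ℕ) (η : ZMod L → ℕ) (k ℓ : ZMod L) : Prop :=
  ∀ i : ℕ, 0 < i → i < (ℓ - k).val → η (k + (i : ZMod L)) = 0

/-- Every site strictly between `k` and `ℓ`, moving counterclockwise from `k`, is empty in `η`. -/
def LeftClear (L : ℕ) (η : ZMod L → ℕ) (k ℓ : ZMod L) : Prop :=
  ∀ i : ℕ, 0 < i → i < (k - ℓ).val → η (k - (i : ZMod L)) = 0

/-- The total rate of the transition `η → η^{k,ℓ}` in the PALRMP with rate function `u`,
rate parameters `x` and asymmetry parameter `q`: a clockwise (right) hop contributes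
`x ℓ * u (η k) (η ℓ)` and a counterclockwise (left) hop contributes `q * x ℓ * u (η k) (η ℓ)`. -/
noncomputable def hopRate (L : ℕ) (u : ℕ → ℕ → ℝ) (x : ZMod L → ℝ) (q : ℝ)
    (η : ZMod L → ℕ) (k ℓ : ZMod L) : ℝ :=
  (if k ≠ ℓ ∧ 1 ≤ η k ∧ RightClear L η k ℓ then x ℓ * u (η k) (η ℓ) else 0) +
  (if k ≠ ℓ ∧ 1 ≤ η k ∧ LeftClear L η k ℓ then q * (x ℓ * u (η k) (η ℓ)) else 0)

/-- The incoming probability current into `η`: the sum over pairs `(k, ℓ)` of the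
probability current due to the transition into `η` in which a particle moves from
site `k` to site `ℓ` (coming from the configuration `η^{ℓ,k} = move L η ℓ k`). -/
noncomputable def inflow (L : ℕ) [NeZero L] (u : ℕ → ℕ → ℝ) (x : ZMod L → ℝ) (q : ℝ)
    (π : (ZMod L → ℕ) → ℝ) (η : ZMod L → ℕ) : ℝ :=
  ∑ k : ZMod L, ∑ ℓ : ZMod L,
    if 1 ≤ η ℓ then π (move L η ℓ k) * hopRate L u x q (move L η ℓ k) k ℓ else 0

/-- The outgoing probability current out of `η`. -/
noncomputable def outflow (L : ℕ) [NeZero L] (u : ℕ → ℕ → ℝ) (x : ZMod L → ℝ) (q : ℝ)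
    (π : (ZMod L → ℕ) → ℝ) (η : ZMod L → ℕ) : ℝ :=
  ∑ k : ZMod L, ∑ ℓ : ZMod L, π η * hopRate L u x q η k ℓ

/-- `π` satisfies the master (balance) equation of the PALRMP on `Ω_{L,N}`:
for every configuration `η` with `N` particles, the incoming probability current
equals the outgoing probability current. -/
def IsStationary (L : ℕ) [NeZero L] (N : ℕ) (u : ℕ → ℕ → ℝ) (x : ZMod L → ℝ) (q : ℝ)
    (π : (ZMod L → ℕ) → ℝ) : Prop :=
  ∀ η : ZMod L → ℕ, (∑ a, η a) = N → inflow L u x q π η = outflow L u x q π η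

/-- The stationary distribution corresponding to the rate `u` in the PALRMP with
asymmetry parameter `q` is factorised, with one-point function `f`: for every
`L ≥ 2`, `N ≥ 1` and all positive rate parameters `x`, the factorised distribution
`η ↦ ∏_ℓ f (x ℓ) (η ℓ)` (up to normalisation) is stationary. -/
def FactorisedPALRMP (u : ℕ → ℕ → ℝ) (q : ℝ) (f : ℝ → ℕ → ℝ) : Prop :=
  (∀ (x : ℝ) (n : ℕ), 0 < x → 0 < f x n) ∧
  ∀ (L N : ℕ) [NeZero L], 2 ≤ L → 1 ≤ N →
    ∀ x : ZMod L → ℝ, (∀ ℓ, 0 < x ℓ) →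
      IsStationary L N u x q (fun η => ∏ ℓ, f (x ℓ) (η ℓ))

/-- The stationary distribution corresponding to the rate `u` in the homogeneous
PALRMP (all rate parameters equal to `1`) with asymmetry parameter `q` is factorised,
with one-point function `f`. -/
def FactorisedHomog (u : ℕ → ℕ → ℝ) (q : ℝ) (f : ℕ → ℝ) : Prop :=
  (∀ n : ℕ, 0 < f n) ∧
  ∀ (L N : ℕ) [NeZero L], 2 ≤ L → 1 ≤ N →
    IsStationary L N u (fun _ => (1 : ℝ)) q (fun η => ∏ ℓ, f (η ℓ))

end LRMP

namespace LRMP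

/-- the algebraic implication in the symmetric case: the symmetrised
balance identity implies the Cocozza-type condition. -/
theorem hslrmp_simplify_u (u : ℕ → ℕ → ℝ) (hu : IsRate u)
    (h : ∀ m n : ℕ, 1 ≤ m → 1 ≤ n →
      u m n + u n m =
        u 1 n / u (n + 1) 0 * (u m 0 / u 1 (m - 1)) * u (n + 1) (m - 1)
          + u 1 m / u (m + 1) 0 * (u n 0 / u 1 (n - 1)) * u (m + 1) (n - 1)) :
    ∀ m n : ℕ, 1 ≤ m → 1 ≤ n →
      u m n / (u m 0 * u 1 n) = u (n + 1) (m - 1) / (u (n + 1) 0 * u 1 (m - 1)) := by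
  have key : ∀ m n : ℕ, u (m + 1) n * (u (n + 1) 0 * u 1 m)
      = u (n + 1) m * (u (m + 1) 0 * u 1 n) := by
    intro m
    induction m with
    | zero => intro n; simp only [zero_add]; ring
    | succ m ih =>
      intro n
      have h1 := h (m + 1) (n + 1) (by omega) (by omega)
      have h2 := ih (n + 1)
      simp only [Nat.add_sub_cancel] at h1
      have p1 := (hu.1 (n + 1 + 1) 0 (by omega)).ne'
      have p2 := (hu.1 1 m le_rfl).ne'
      have p3 := (hu.1 (m + 1 + 1) 0 (by omega)).ne'
      have p4 := (hu.1 1 n le_rfl).ne'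
      have e : u 1 (n + 1) / u (n + 1 + 1) 0 * (u (m + 1) 0 / u 1 m) * u (n + 1 + 1) m
          = u (m + 1) (n + 1) := by
        field_simp
        linarith
      rw [e] at h1
      have h3 := add_left_cancel h1
      rw [h3]
      field_simp
  intro m n hm hn
  obtain ⟨m, rfl⟩ : ∃ k, m = k + 1 := ⟨m - 1, by omega⟩
  simp only [Nat.add_sub_cancel]
  have p1 := hu.1 (n + 1) 0 (by omega)
  have p2 := hu.1 1 m le_rfl
  have p3 := hu.1 (m + 1) 0 (by omega)
  have p4 := hu.1 1 n le_rfl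
  rw [div_eq_div_iff (by positivity) (by positivity)]
  exact key m n


end LRMP
end

section
/- Suppose the stationary distribution corresponding to the rate function u is factorised in the homogeneous SLRMP (q = 1, all rate parameters 1). Then there exists a one-point function f corresponding to u satisfying f(n) = f(0)·∏_{i=1}^{n} (u(1,i−1)/u(i,0)) for all n ∈ ℕ (equivalently, after rescaling, f(n) = ∏_{i=1}^{n} (u(1,i−1)/u(i,0))). -/
open scoped Classical

namespace LRMP

theorem rightClear_two (η : ZMod 2 → ℕ) (k l : ZMod 2) : RightClear 2 η k l := by
  intro i h0 h1
  have := ZMod.val_lt (l - k)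
  omega

theorem leftClear_two (η : ZMod 2 → ℕ) (k l : ZMod 2) : LeftClear 2 η k l := by
  intro i h0 h1
  have := ZMod.val_lt (k - l)
  omega

theorem sum_zmod_two (F : ZMod 2 → ℝ) : ∑ k, F k = F 0 + F 1 := Fin.sum_univ_two F

theorem prod_zmod_two (F : ZMod 2 → ℝ) : ∏ k, F k = F 0 * F 1 := Fin.prod_univ_two F

theorem detailed (u : ℕ → ℕ → ℝ) (f : ℕ → ℝ) (h : FactorisedHomog u 1 f) (n : ℕ) :
    f 1 * f n * u 1 n = f 0 * f (n + 1) * u (n + 1) 0 := by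
  have hs := h.2 2 (n + 1) le_rfl (by omega) (fun i => if i = 0 then 0 else n + 1)
    (by
      have : ∀ F : ZMod 2 → ℕ, ∑ k, F k = F 0 + F 1 := fun F => Fin.sum_univ_two F
      rw [this]; simp)
  unfold inflow outflow at hs
  simp only [sum_zmod_two, prod_zmod_two, hopRate, rightClear_two, leftClear_two, move] at hs
  simp at hs
  linarith

theorem move_sum (L : ℕ) [NeZero L] (η : ZMod L → ℕ) (k l : ZMod L) (hkl : k ≠ l)
    (hk : 1 ≤ η k) : ∑ a, move L η k l a = ∑ a, η a := by
  have h1 : ∀ a, move L η k l a + (if a = k then 1 else 0) = η a + (if a = l then 1 else 0) := by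
    intro a
    unfold move
    by_cases hak : a = k
    · subst hak
      simp [hkl]; omega
    · simp [hak]; split_ifs <;> rfl
  have h2 := Finset.sum_congr (rfl : (Finset.univ : Finset (ZMod L)) = Finset.univ)
    (fun a _ => h1 a)
  simp only [Finset.sum_add_distrib, Finset.sum_ite_eq', Finset.mem_univ, if_true] at h2
  omega

theorem rescale (u : ℕ → ℕ → ℝ) (q : ℝ) (f : ℕ → ℝ) (h : FactorisedHomog u q f) (a b : ℝ)
    (ha : 0 < a) (hb : 0 < b) : FactorisedHomog u q (fun n => a * b ^ n * f n) := by
  refine ⟨fun n => mul_pos (mul_pos ha (pow_pos hb n)) (h.1 n), ?_⟩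
  intro L N _ hL hN η hη
  have key := h.2 L N hL hN η hη
  have hp : ∀ ξ : ZMod L → ℕ, ∏ l, (a * b ^ ξ l * f (ξ l))
      = (a ^ L * b ^ (∑ l, ξ l)) * ∏ l, f (ξ l) := by
    intro ξ
    simp [Finset.prod_mul_distrib, Finset.prod_pow_eq_pow_sum, ZMod.card]
  have hin : inflow L u (fun _ => (1 : ℝ)) q (fun η => ∏ l, (a * b ^ η l * f (η l))) η
      = (a ^ L * b ^ N) * inflow L u (fun _ => (1 : ℝ)) q (fun η => ∏ l, f (η l)) η := by
    unfold inflow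
    simp only [Finset.mul_sum]
    refine Finset.sum_congr rfl fun k _ => Finset.sum_congr rfl fun l _ => ?_
    split_ifs with hl
    · by_cases hkl : l = k
      · subst hkl
        simp [hopRate]
      · rw [hp, move_sum L η l k hkl hl, hη]; ring
    · simp
  have hout : outflow L u (fun _ => (1 : ℝ)) q (fun η => ∏ l, (a * b ^ η l * f (η l))) η
      = (a ^ L * b ^ N) * outflow L u (fun _ => (1 : ℝ)) q (fun η => ∏ l, f (η l)) η := by
    unfold outflow
    simp only [Finset.mul_sum]
    refine Finset.sum_congr rfl fun k _ => Finset.sum_congr rfl fun l _ => ?_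
    rw [hp, hη]; ring
  rw [hin, hout, key]

/-- if the stationary distribution corresponding to `u` is factorised in
the homogeneous SLRMP (`q = 1`), then there is a one-point function `f` for `u` with
`f n = f 0 * ∏_{i=1}^{n} (u (1, i-1) / u (i, 0))`; equivalently, after rescaling,
`f n = ∏_{i=1}^{n} (u (1, i-1) / u (i, 0))` is a one-point function. -/
theorem hslrmp_onepoint_form
    (u : ℕ → ℕ → ℝ) (hu : IsRate u)
    (h : ∃ f : ℕ → ℝ, FactorisedHomog u 1 f) :
    (∃ f : ℕ → ℝ, FactorisedHomog u 1 f ∧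
      ∀ n : ℕ, f n = f 0 * ∏ i ∈ Finset.range n, u 1 i / u (i + 1) 0) ∧
    FactorisedHomog u 1 (fun n => ∏ i ∈ Finset.range n, u 1 i / u (i + 1) 0) := by
  have main : FactorisedHomog u 1 (fun n => ∏ i ∈ Finset.range n, u 1 i / u (i + 1) 0) := by
    obtain ⟨f, hf⟩ := h
    have h0 := hf.1 0
    have h1 := hf.1 1
    have hr := rescale u 1 f hf (1 / f 0) (f 0 / f 1) (by positivity) (by positivity)
    convert hr using 2 with n
    induction n with
    | zero => simp [h0.ne']
    | succ n ih =>
      rw [Finset.prod_range_succ, ih]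
      have hd := detailed u f hf n
      have hu' := hu.1 (n + 1) 0 (by omega)
      have e : u 1 n / u (n + 1) 0 * f n = f 0 / f 1 * f (n + 1) := by
        field_simp
        linarith
      calc _ = 1 / f 0 * (f 0 / f 1) ^ n * (u 1 n / u (n + 1) 0 * f n) := by ring
        _ = _ := by rw [e]; ring
  exact ⟨⟨_, main, fun n => by simp⟩, main⟩


end LRMP
end

section
/- Let φ, ψ : ℕ → ℝ with φ(0) = 0, φ(m) > 0 for m ≥ 1, and ψ(n) > 0 for all n ≥ 0, and define u(m,n) = φ(m)·ψ(n). Then u satisfies u(m,n)/(u(m,0)·u(1,n)) = u(n+1,m−1)/(u(n+1,0)·u(1,m−1)) for all m, n ≥ 1; consequently the stationary distribution corresponding to u in the homogeneous SLRMP (q = 1) is factorised, with one-point function f(n) = ∏_{i=1}^{n} (ψ(i−1)/φ(i)). -/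
open scoped Classical

namespace LRMP

theorem rightClear_move_iff (L : ℕ) [NeZero L] (η : ZMod L → ℕ) (k ℓ : ZMod L) :
    RightClear L (move L η ℓ k) k ℓ ↔ LeftClear L η ℓ k := by
  unfold RightClear LeftClear
  have hlt : (ℓ - k).val < L := ZMod.val_lt _
  have hz : (((ℓ - k).val : ℕ) : ZMod L) = ℓ - k := ZMod.natCast_zmod_val _
  have hne : ∀ i : ℕ, 0 < i → i < L → ((i : ℕ) : ZMod L) ≠ 0 := by
    intro i h0 h1 h
    rw [ZMod.natCast_eq_zero_iff] at h
    exact absurd (Nat.le_of_dvd h0 h) (by omega)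
  have key : ∀ i : ℕ, 0 < i → i < (ℓ - k).val →
      move L η ℓ k (k + (i : ZMod L)) = η (ℓ - (((ℓ - k).val - i : ℕ) : ZMod L)) := by
    intro i h0 h1
    have e : ℓ - (((ℓ - k).val - i : ℕ) : ZMod L) = k + (i : ZMod L) := by
      rw [Nat.cast_sub h1.le, hz]; ring
    have n1 : k + (i : ZMod L) ≠ ℓ := by
      intro h
      apply hne ((ℓ - k).val - i) (by omega) (by omega)
      have : ℓ - (((ℓ - k).val - i : ℕ) : ZMod L) = ℓ := e.trans h
      simpa using this
    have n2 : k + (i : ZMod L) ≠ k := by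
      intro h
      exact hne i h0 (by omega) (by simpa using h)
    rw [e, move, if_neg n1, if_neg n2]
  constructor
  · intro h i h0 h1
    have := h ((ℓ - k).val - i) (by omega) (by omega)
    rw [key _ (by omega) (by omega)] at this
    rwa [show (ℓ - k).val - ((ℓ - k).val - i) = i by omega] at this
  · intro h i h0 h1
    rw [key i h0 h1]
    exact h _ (by omega) (by omega)

theorem leftClear_move_iff (L : ℕ) [NeZero L] (η : ZMod L → ℕ) (k ℓ : ZMod L) :
    LeftClear L (move L η ℓ k) k ℓ ↔ RightClear L η ℓ k := by
  unfold RightClear LeftClear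
  have hlt : (k - ℓ).val < L := ZMod.val_lt _
  have hz : (((k - ℓ).val : ℕ) : ZMod L) = k - ℓ := ZMod.natCast_zmod_val _
  have hne : ∀ i : ℕ, 0 < i → i < L → ((i : ℕ) : ZMod L) ≠ 0 := by
    intro i h0 h1 h
    rw [ZMod.natCast_eq_zero_iff] at h
    exact absurd (Nat.le_of_dvd h0 h) (by omega)
  have key : ∀ i : ℕ, 0 < i → i < (k - ℓ).val →
      move L η ℓ k (k - (i : ZMod L)) = η (ℓ + (((k - ℓ).val - i : ℕ) : ZMod L)) := by
    intro i h0 h1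
    have e : ℓ + (((k - ℓ).val - i : ℕ) : ZMod L) = k - (i : ZMod L) := by
      rw [Nat.cast_sub h1.le, hz]; ring
    have n1 : k - (i : ZMod L) ≠ ℓ := by
      intro h
      apply hne ((k - ℓ).val - i) (by omega) (by omega)
      have : ℓ + (((k - ℓ).val - i : ℕ) : ZMod L) = ℓ := e.trans h
      simpa using this
    have n2 : k - (i : ZMod L) ≠ k := by
      intro h
      exact hne i h0 (by omega) (by simpa using h)
    rw [e, move, if_neg n1, if_neg n2]
  constructor
  · intro h i h0 h1
    have := h ((k - ℓ).val - i) (by omega) (by omega)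
    rw [key _ (by omega) (by omega)] at this
    rwa [show (k - ℓ).val - ((k - ℓ).val - i) = i by omega] at this
  · intro h i h0 h1
    rw [key i h0 h1]
    exact h _ (by omega) (by omega)

theorem weight_balance (L : ℕ) [NeZero L] (φ ψ f : ℕ → ℝ)
    (hf : ∀ n, f (n + 1) * φ (n + 1) = f n * ψ n)
    (η : ZMod L → ℕ) (k ℓ : ZMod L) (hkl : k ≠ ℓ) (h1 : 1 ≤ η ℓ) :
    (∏ a, f (move L η ℓ k a)) * (φ (move L η ℓ k k) * ψ (move L η ℓ k ℓ)) =
      (∏ a, f (η a)) * (φ (η ℓ) * ψ (η k)) := by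
  have mk : move L η ℓ k k = η k + 1 := by simp [move, hkl]
  have ml : move L η ℓ k ℓ = η ℓ - 1 := by simp [move]
  obtain ⟨n, hn⟩ : ∃ n, η ℓ = n + 1 := ⟨η ℓ - 1, by omega⟩
  have split : ∀ g : ZMod L → ℝ,
      ∏ a, g a = g k * (g ℓ * ∏ a ∈ (Finset.univ.erase k).erase ℓ, g a) := by
    intro g
    rw [Finset.mul_prod_erase _ _ (by simp [hkl.symm]), Finset.mul_prod_erase _ _ (by simp)]
  rw [split (fun a => f (move L η ℓ k a)), split (fun a => f (η a))]
  have rest : ∏ a ∈ (Finset.univ.erase k).erase ℓ, f (move L η ℓ k a) =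
      ∏ a ∈ (Finset.univ.erase k).erase ℓ, f (η a) := by
    apply Finset.prod_congr rfl
    intro a ha
    simp only [Finset.mem_erase, Finset.mem_univ, and_true] at ha
    simp [move, ha.1, ha.2]
  rw [rest]
  simp only [mk, ml, hn, Nat.add_sub_cancel]
  have a1 := hf (η k)
  have a2 := hf n
  generalize ∏ a ∈ (Finset.univ.erase k).erase ℓ, f (η a) = R
  linear_combination (f n * ψ n * R) * a1 - (f (η k) * ψ (η k) * R) * a2

/-- for `u (m, n) = φ m * ψ n` with `φ 0 = 0`, `φ` positive on `m ≥ 1`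
and `ψ` positive, the Cocozza-type condition holds and the stationary distribution
corresponding to `u` in the homogeneous SLRMP is factorised with one-point function
`f n = ∏_{i=1}^{n} (ψ (i-1) / φ i)`. -/
theorem hslrmp_product_rate
    (φ ψ : ℕ → ℝ) (hφ0 : φ 0 = 0)
    (hφ : ∀ m : ℕ, 1 ≤ m → 0 < φ m) (hψ : ∀ n : ℕ, 0 < ψ n) :
    (∀ m n : ℕ, 1 ≤ m → 1 ≤ n →
      φ m * ψ n / (φ m * ψ 0 * (φ 1 * ψ n)) =
        φ (n + 1) * ψ (m - 1) / (φ (n + 1) * ψ 0 * (φ 1 * ψ (m - 1)))) ∧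
    FactorisedHomog (fun m n => φ m * ψ n) 1
      (fun n => ∏ i ∈ Finset.range n, ψ i / φ (i + 1)) := by
  refine ⟨?_, ?_, ?_⟩
  · intro m n hm hn
    have p1 := (hφ m hm).ne'
    have p2 := (hφ (n + 1) (by omega)).ne'
    have p3 := (hφ 1 le_rfl).ne'
    have p4 := (hψ 0).ne'
    have p5 := (hψ n).ne'
    have p6 := (hψ (m - 1)).ne'
    field_simp
  · intro n
    exact Finset.prod_pos fun i _ => div_pos (hψ i) (hφ (i + 1) (by omega))
  · intro L N _ _ _ η _
    unfold inflow outflow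
    rw [Finset.sum_comm]
    refine Finset.sum_congr rfl fun ℓ _ => Finset.sum_congr rfl fun k _ => ?_
    by_cases h1 : 1 ≤ η ℓ
    swap
    · simp [hopRate, h1]
    rw [if_pos h1]
    by_cases hkl : k = ℓ
    · simp [hopRate, hkl]
    have hf : ∀ n, (∏ i ∈ Finset.range (n + 1), ψ i / φ (i + 1)) * φ (n + 1) =
        (∏ i ∈ Finset.range n, ψ i / φ (i + 1)) * ψ n := by
      intro n
      have := (hφ (n + 1) (by omega)).ne'
      rw [Finset.prod_range_succ]
      field_simp
    have W := weight_balance L φ ψ (fun n => ∏ i ∈ Finset.range n, ψ i / φ (i + 1)) hf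
      η k ℓ hkl h1
    have mk : 1 ≤ move L η ℓ k k := by simp [move, hkl]
    have hlk : ℓ ≠ k := fun h => hkl h.symm
    simp only [hopRate, rightClear_move_iff, leftClear_move_iff, mk, h1, hkl, hlk, ne_eq,
      not_false_eq_true, true_and, one_mul, mul_add, mul_ite, mul_zero]
    rw [add_comm]
    simp only [W]

end LRMP
end

section
/- In the discrete HAD process on Ω_{L,N} with rate parameters x_1,…,x_L > 0, the stationary distribution is π(η) = (N!/(x_1+⋯+x_L)^N)·∏_{j=1}^{L} x_j^{η_j}/η_j!, and for any fixed site ℓ and any 0 ≤ m ≤ N, the stationary probability that site ℓ contains exactly m particles equals the binomial probability C(N,m)·p^m·(1−p)^{N−m} with p = x_ℓ/(x_1+⋯+x_L); that is, ∑_{η ∈ Ω_{L,N}, η_ℓ = m} π(η) = C(N,m)·(x_ℓ/(x_1+⋯+x_L))^m·(1 − x_ℓ/(x_1+⋯+x_L))^{N−m}. -/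
open scoped Classical

namespace LRMP

theorem count_aux {L : ℕ} [NeZero L] (a : ZMod L) (P : ZMod L → Prop) (v : ZMod L → ℕ)
    (w : ℕ → ZMod L) (hwv : ∀ b, w (v b) = b) (hvw : ∀ i, i < L → v (w i) = i)
    (hv : ∀ b, v b < L) (h0 : ∀ b, a ≠ b ↔ 0 < v b) :
    ∑ b, (if a ≠ b ∧ P b ∧ (∀ i : ℕ, 0 < i → i < v b → ¬ P (w i)) then (1 : ℝ) else 0)
      = if ∃ b, a ≠ b ∧ P b then 1 else 0 := by
  by_cases h : ∃ b, a ≠ b ∧ P b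
  · rw [if_pos h]
    have h' : ∃ i, 0 < i ∧ i < L ∧ P (w i) := by
      obtain ⟨b, hb, hP⟩ := h
      exact ⟨v b, (h0 b).1 hb, hv b, by rw [hwv]; exact hP⟩
    obtain ⟨hi0, hiL, hiP⟩ := Nat.find_spec h'
    have hmin := fun m => Nat.find_min h' (m := m)
    generalize Nat.find h' = n at *
    rw [Finset.sum_eq_single (w n)]
    · rw [if_pos]
      refine ⟨(h0 _).2 (by rw [hvw n hiL]; exact hi0), hiP, ?_⟩
      intro i hi hlt hP
      rw [hvw n hiL] at hlt
      exact hmin i hlt ⟨hi, by omega, hP⟩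
    · intro b _ hb
      rw [if_neg]
      rintro ⟨hab, hPb, hc⟩
      rcases lt_trichotomy (v b) n with hlt | heq | hgt
      · exact hmin _ hlt ⟨(h0 b).1 hab, hv b, by rw [hwv]; exact hPb⟩
      · exact hb (by rw [← heq, hwv])
      · exact hc n hi0 hgt hiP
    · simp
  · rw [if_neg h]
    apply Finset.sum_eq_zero
    intro b _
    rw [if_neg]
    rintro ⟨h1, h2, _⟩
    exact h ⟨b, h1, h2⟩

theorem val_pos_iff {L : ℕ} [NeZero L] (c : ZMod L) : 0 < c.val ↔ c ≠ 0 := by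
  rw [Nat.pos_iff_ne_zero, ne_eq, ZMod.val_eq_zero]

theorem count_right {L : ℕ} [NeZero L] (η : ZMod L → ℕ) (a : ZMod L) :
    ∑ b, (if a ≠ b ∧ 1 ≤ η b ∧ RightClear L η a b then (1 : ℝ) else 0)
      = if ∃ b, a ≠ b ∧ 1 ≤ η b then 1 else 0 := by
  have hh := count_aux a (fun b => 1 ≤ η b) (fun b => (b - a).val) (fun i => a + (i : ZMod L))
    ?_ ?_ ?_ ?_
  · simp only [Nat.not_le, Nat.lt_one_iff] at hh
    convert hh
    exact Iff.rfl
  · intro b; simp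
  · intro i hi; simp [ZMod.val_cast_of_lt hi]
  · intro b; exact ZMod.val_lt _
  · intro b; rw [val_pos_iff, sub_ne_zero]; exact ne_comm

theorem clear_iff {L : ℕ} [NeZero L] (η : ZMod L → ℕ) (k a : ZMod L) :
    RightClear L η k a ↔ ∀ i : ℕ, 0 < i → i < (a - k).val → η (a - (i : ZMod L)) = 0 := by
  have key : ∀ i : ℕ, i < (a - k).val → a - (i : ZMod L) = k + (((a - k).val - i : ℕ) : ZMod L) := by
    intro i hi
    rw [Nat.cast_sub hi.le, ZMod.natCast_zmod_val]; ring
  constructor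
  · intro h i h0 hi
    rw [key i hi]
    exact h _ (by omega) (by omega)
  · intro h i h0 hi
    have := h ((a - k).val - i) (by omega) (by omega)
    rw [key _ (by omega)] at this
    rwa [show (a - k).val - ((a - k).val - i) = i by omega] at this

theorem count_left {L : ℕ} [NeZero L] (η : ZMod L → ℕ) (a : ZMod L) :
    ∑ b, (if b ≠ a ∧ 1 ≤ η b ∧ RightClear L η b a then (1 : ℝ) else 0)
      = if ∃ b, a ≠ b ∧ 1 ≤ η b then 1 else 0 := by
  have hh := count_aux a (fun b => 1 ≤ η b) (fun b => (a - b).val) (fun i => a - (i : ZMod L))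
    ?_ ?_ ?_ ?_
  · simp only [Nat.not_le, Nat.lt_one_iff, ← clear_iff] at hh
    simp only [ne_comm (b := a)]
    convert hh
  · intro b; simp
  · intro i hi; simp [ZMod.val_cast_of_lt hi]
  · intro b; exact ZMod.val_lt _
  · intro b; rw [val_pos_iff, sub_ne_zero]

theorem clear_move {L : ℕ} [NeZero L] (η : ZMod L → ℕ) (k l : ZMod L) :
    RightClear L (move L η l k) k l ↔ RightClear L η k l := by
  unfold RightClear
  refine forall_congr' fun i => forall_congr' fun h0 => forall_congr' fun hi => ?_
  have hiL : i < L := hi.trans (ZMod.val_lt _)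
  have hv : ((i : ZMod L)).val = i := ZMod.val_cast_of_lt hiL
  have h1 : k + (i : ZMod L) ≠ l := by
    intro h
    rw [← h] at hi
    simp [hv] at hi
  have h2 : k + (i : ZMod L) ≠ k := by
    intro h
    have : (i : ZMod L) = 0 := by simpa using h
    rw [this] at hv
    simp at hv; omega
  simp [move, h1, h2]

theorem prod_move {L : ℕ} [NeZero L] (x : ZMod L → ℝ) (hx : ∀ l, 0 < x l) (η : ZMod L → ℕ)
    (k l : ZMod L) (hkl : k ≠ l) (hl : 1 ≤ η l) :
    (∏ j, x j ^ (move L η l k) j / ((move L η l k) j).factorial) * (x l * (1 / (η l : ℝ)))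
      = (∏ j, x j ^ η j / ((η j).factorial : ℝ)) * (x k / ((η k : ℝ) + 1)) := by
  have hk : k ∈ Finset.univ.erase l := by simp [hkl]
  rw [← Finset.mul_prod_erase _ _ (Finset.mem_univ l), ← Finset.mul_prod_erase _ _ hk,
    ← Finset.mul_prod_erase (a := l) _ (fun j => x j ^ η j / ((η j).factorial : ℝ)) (Finset.mem_univ l),
    ← Finset.mul_prod_erase (a := k) _ (fun j => x j ^ η j / ((η j).factorial : ℝ)) hk]
  have : ∏ j ∈ (Finset.univ.erase l).erase k, x j ^ (move L η l k) j / (((move L η l k) j).factorial : ℝ)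
      = ∏ j ∈ (Finset.univ.erase l).erase k, x j ^ η j / ((η j).factorial : ℝ) := by
    apply Finset.prod_congr rfl
    intro j hj
    simp at hj
    simp [move, hj.1, hj.2]
  rw [this]
  have e1 : move L η l k l = η l - 1 := by simp [move]
  have e2 : move L η l k k = η k + 1 := by simp [move, hkl]
  rw [e1, e2]
  obtain ⟨n, hn⟩ : ∃ n, η l = n + 1 := ⟨η l - 1, by omega⟩
  rw [hn]
  have := (hx l).ne'
  have := (hx k).ne'
  simp only [Nat.add_sub_cancel, Nat.factorial_succ]
  push_cast
  have : (n.factorial : ℝ) ≠ 0 := by positivity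
  have : ((η k).factorial : ℝ) ≠ 0 := by positivity
  have : (n : ℝ) + 1 ≠ 0 := by positivity
  have : (η k : ℝ) + 1 ≠ 0 := by positivity
  field_simp
  ring

theorem stat {L : ℕ} (N : ℕ) [NeZero L] (x : ZMod L → ℝ) (hx : ∀ l, 0 < x l) (C : ℝ) :
    IsStationary L N (fun m n => if m = 0 then 0 else 1 / ((n : ℝ) + 1)) x 0
      (fun η => C * ∏ j, x j ^ η j / (η j).factorial) := by
  intro η _
  unfold inflow outflow
  set W := C * ∏ j, x j ^ η j / ((η j).factorial : ℝ) with hW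
  have hin : ∀ k l : ZMod L, (if 1 ≤ η l then
      (C * ∏ j, x j ^ (move L η l k) j / ((move L η l k) j).factorial) *
      hopRate L (fun m n => if m = 0 then 0 else 1 / ((n : ℝ) + 1)) x 0 (move L η l k) k l else 0)
      = W * (x k / ((η k : ℝ) + 1)) *
        (if k ≠ l ∧ 1 ≤ η l ∧ RightClear L η k l then 1 else 0) := by
    intro k l
    unfold hopRate
    rw [clear_move]
    by_cases hl : 1 ≤ η l
    · by_cases hkl : k = l
      · simp [hkl]
      · have e1 : move L η l k l = η l - 1 := by simp [move]
        have e2 : move L η l k k = η k + 1 := by simp [move, hkl]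
        rw [e1, e2]
        by_cases hc : RightClear L η k l
        · have := prod_move x hx η k l hkl hl
          simp only [hl, hkl, hc, if_true, ne_eq, not_false_eq_true, and_self, zero_mul, ite_self, add_zero, mul_one, Nat.le_add_left, Nat.succ_ne_zero, if_false]
          rw [Nat.cast_sub hl, Nat.cast_one, sub_add_cancel, mul_assoc, this, hW, mul_assoc]
        · simp [hc]
    · simp [hl]
  have hout : ∀ k l : ZMod L, W * hopRate L (fun m n => if m = 0 then 0 else 1 / ((n : ℝ) + 1)) x 0 η k l
      = W * (x l / ((η l : ℝ) + 1)) *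
        (if k ≠ l ∧ 1 ≤ η k ∧ RightClear L η k l then 1 else 0) := by
    intro k l
    unfold hopRate
    by_cases h : k ≠ l ∧ 1 ≤ η k ∧ RightClear L η k l
    · have h2 : η k ≠ 0 := by have := h.2.1; omega
      rw [if_pos h, if_pos h]
      simp [h2, div_eq_mul_inv]
    · rw [if_neg h, if_neg h]; simp
  simp only [hin, ← hW, hout]
  rw [Finset.sum_comm (f := fun k l => W * (x l / ((η l : ℝ) + 1)) *
        (if k ≠ l ∧ 1 ≤ η k ∧ RightClear L η k l then 1 else 0))]
  simp only [← Finset.mul_sum, count_right, count_left]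

theorem marg {L : ℕ} (N : ℕ) [NeZero L] (x : ZMod L → ℝ) (l : ZMod L) (m : ℕ) (hm : m ≤ N) :
    ∑ η ∈ Finset.filter (fun η : ZMod L → ℕ => (∑ a, η a) = N ∧ η l = m)
          (Fintype.piFinset fun _ : ZMod L => Finset.range (N + 1)),
        ∏ j, x j ^ η j / ((η j).factorial : ℝ)
      = x l ^ m / (m.factorial : ℝ) * ((∑ j ∈ Finset.univ.erase l, x j) ^ (N - m) / ((N - m).factorial : ℝ)) := by
  rw [Finset.sum_pow_eq_sum_piAntidiag, Finset.sum_div, Finset.mul_sum]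
  refine Finset.sum_bij' (fun η _ => Function.update η l 0) (fun κ _ => Function.update κ l m) ?_ ?_ ?_ ?_ ?_
  · intro η h
    simp only [Finset.mem_filter] at h
    obtain ⟨-, h1, h2⟩ := h
    rw [Finset.mem_piAntidiag]
    rw [← Finset.add_sum_erase _ _ (Finset.mem_univ l)] at h1
    constructor
    · rw [Finset.sum_congr rfl (g := fun j => η j)]
      · omega
      · intro j hj
        simp at hj
        simp [hj]
    · intro i hi
      simp only [Finset.mem_erase, Finset.mem_univ, and_true]
      rintro rfl
      simp at hi
  · intro κ h
    rw [Finset.mem_piAntidiag] at h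
    have hs : ∑ a, Function.update κ l m a = N := by
      rw [← Finset.add_sum_erase _ _ (Finset.mem_univ l), Finset.sum_congr rfl (g := κ)]
      · simp [h.1]; omega
      · intro j hj
        simp at hj
        simp [hj]
    simp only [Finset.mem_filter, Fintype.mem_piFinset, Finset.mem_range]
    refine ⟨fun a => ?_, hs, by simp⟩
    have := Finset.single_le_sum (f := Function.update κ l m) (fun _ _ => Nat.zero_le _) (Finset.mem_univ a)
    omega
  · intro η h
    simp only [Finset.mem_filter] at h
    simp [← h.2.2]
  · intro κ h
    rw [Finset.mem_piAntidiag] at h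
    have : κ l = 0 := by
      by_contra h0
      simpa using h.2 l h0
    simp [← this]
  · intro η h
    simp only [Finset.mem_filter] at h
    obtain ⟨-, h1, h2⟩ := h
    rw [← Finset.add_sum_erase _ _ (Finset.mem_univ l)] at h1
    have he : ∀ j ∈ Finset.univ.erase l, Function.update η l 0 j = η j := by
      intro j hj
      simp at hj
      simp [hj]
    have hsp := Nat.multinomial_spec (Finset.univ.erase l) (Function.update η l 0)
    rw [Finset.sum_congr rfl he, Finset.prod_congr rfl (fun j hj => by rw [he j hj]),
      show ∑ j ∈ Finset.univ.erase l, η j = N - m by omega] at hsp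
    rw [← Finset.mul_prod_erase _ _ (Finset.mem_univ l), h2, ← hsp,
      Finset.prod_congr (g := fun j => x j ^ η j) rfl
        (fun j hj => show x j ^ Function.update η l 0 j = _ by rw [he j hj]),
      Finset.prod_div_distrib]
    have h3 : ((Nat.multinomial (Finset.univ.erase l) (Function.update η l 0) : ℕ) : ℝ) ≠ 0 := by
      intro h0
      have h0' : Nat.multinomial (Finset.univ.erase l) (Function.update η l 0) = 0 := by exact_mod_cast h0
      rw [h0', mul_zero] at hsp
      exact (Nat.factorial_pos _).ne hsp
    have h4 : (∏ j ∈ Finset.univ.erase l, ((η j).factorial : ℝ)) ≠ 0 :=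
      Finset.prod_ne_zero_iff.2 fun j _ => by positivity
    push_cast
    field_simp

/-- the discrete HAD process (TALRMP with `u (m, n) = 1 / (n + 1)` for
`m ≥ 1`) has stationary distribution
`π η = (N! / (x 1 + ⋯ + x L) ^ N) * ∏_j x j ^ η j / (η j)!`, and under `π` the number of
particles at any fixed site `ℓ` is binomial with parameters `N` and `x ℓ / ∑ x`. -/
theorem discrete_HAD
    (L N : ℕ) [NeZero L] (hL : 2 ≤ L) (hN : 1 ≤ N)
    (x : ZMod L → ℝ) (hx : ∀ ℓ, 0 < x ℓ) :
    IsStationary L N (fun m n => if m = 0 then 0 else 1 / ((n : ℝ) + 1)) x 0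
      (fun η => (N.factorial : ℝ) / (∑ j, x j) ^ N * ∏ j, x j ^ η j / (η j).factorial) ∧
    ∀ (ℓ : ZMod L) (m : ℕ), m ≤ N →
      ∑ η ∈ Finset.filter (fun η : ZMod L → ℕ => (∑ a, η a) = N ∧ η ℓ = m)
          (Fintype.piFinset fun _ : ZMod L => Finset.range (N + 1)),
        (N.factorial : ℝ) / (∑ j, x j) ^ N * ∏ j, x j ^ η j / (η j).factorial
      = (N.choose m : ℝ) * (x ℓ / ∑ j, x j) ^ m * (1 - x ℓ / ∑ j, x j) ^ (N - m) := by
  refine ⟨stat N x hx _, ?_⟩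
  intro ℓ m hm
  rw [← Finset.mul_sum, marg N x ℓ m hm]
  have hS : (0 : ℝ) < ∑ j, x j := Finset.sum_pos (fun j _ => hx j) Finset.univ_nonempty
  have hE : ∑ j ∈ Finset.univ.erase ℓ, x j = ∑ j, x j - x ℓ := by
    rw [← Finset.add_sum_erase _ _ (Finset.mem_univ ℓ)]; ring
  rw [hE]
  generalize (∑ j, x j) = S at *
  obtain ⟨n, rfl⟩ := Nat.exists_eq_add_of_le hm
  rw [Nat.cast_choose ℝ hm, Nat.add_sub_cancel_left, one_sub_div hS.ne', div_pow, div_pow, pow_add]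
  have := hS.ne'
  field_simp

end LRMP
end
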